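/- (Conditioning-reduction inequality from Appendix B) Let X̂, Y₀, Y', Y, W, U be finite-valued random variables such that X̂ and (Y',Y,W) are conditionally independent given (Y₀,U) (the Markov chain X̂–(Y₀,U)–(Y',Y,W) holds). Then I(X̂; Y₀ | (Y',Y,W,U)) ≤ I(X̂; Y₀ | (Y',W,U)). -/

import Mathlib

open scoped Classical BigOperators

noncomputable section

namespace RelayPaper

variable {Ω : Type*} [Fintype Ω]

/-- Distribution (pushforward pmf) of the random variable `X` under the pmf `p`. -/
def dist (p : Ω → ℝ) {α : Type*} (X : Ω → α) (a : α) : ℝ :=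
  ∑ ω, if X ω = a then p ω else 0

/-- Shannon entropy (base 2) of the random variable `X` under the pmf `p`. -/
def ent (p : Ω → ℝ) {α : Type*} [Fintype α] (X : Ω → α) : ℝ :=
  -∑ a, dist p X a * Real.logb 2 (dist p X a)

/-- Conditional entropy H(X | U). -/
def condEnt (p : Ω → ℝ) {α β : Type*} [Fintype α] [Fintype β]
    (X : Ω → α) (U : Ω → β) : ℝ :=
  ent p (fun ω => (X ω, U ω)) - ent p U

/-- Conditional mutual information I(X ; Y | U). -/
def condMI (p : Ω → ℝ) {α β γ : Type*} [Fintype α] [Fintype β] [Fintype γ]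
    (X : Ω → α) (Y : Ω → β) (U : Ω → γ) : ℝ :=
  ent p (fun ω => (X ω, U ω)) + ent p (fun ω => (Y ω, U ω))
    - ent p (fun ω => (X ω, Y ω, U ω)) - ent p U

/-- `p` is a probability mass function. -/
def IsPMF (p : Ω → ℝ) : Prop := (∀ ω, 0 ≤ p ω) ∧ ∑ ω, p ω = 1

/-- `A` and `B` are conditionally independent given `C` (the Markov chain A – C – B). -/
def CondIndep (p : Ω → ℝ) {α β γ : Type*} (A : Ω → α) (B : Ω → β) (C : Ω → γ) : Prop :=
  ∀ a b c,
    dist p (fun ω => (A ω, B ω, C ω)) (a, b, c) * dist p C c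
      = dist p (fun ω => (A ω, C ω)) (a, c) * dist p (fun ω => (B ω, C ω)) (b, c)

end RelayPaper

open RelayPaper

/-!
Both `I(X̂; Y₀ | Y, V)` and `I(X̂; Y₀ | V)`, with `V = (Y', W, U)`, occur in the two chain-rule
expansions of `I(X̂; (Y₀, Y) | V)`, so the first exceeds the second by at most `I(X̂; Y | Y₀, V)`.
By the chain rule again this is at most `I(X̂; (Y', Y, W) | Y₀, U)`, which vanishes under the Markov
condition. Nonnegativity of conditional
mutual information is Gibbs' inequality: it is the relative entropy of the law of `(A, B, C)` with
respect to its conditionally independent counterpart.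
-/

namespace RelayPaper

section RelativeEntropy

variable {ι : Type*} [Fintype ι]

/-- Relative entropy (Kullback–Leibler divergence, base 2) of the mass function `f` with respect to
`g`. It is meaningful only if `f` vanishes wherever `g` does: a term with `g i = 0` counts as `0`,
not as `+∞`. -/
def relEnt (f g : ι → ℝ) : ℝ :=
  ∑ i, f i * Real.logb 2 (f i / g i)

theorem relEnt_self (f : ι → ℝ) : relEnt f f = 0 := by
  refine Finset.sum_eq_zero fun i _ => ?_
  rcases eq_or_ne (f i) 0 with hi | hi
  · rw [hi, zero_mul]
  · rw [div_self hi, Real.logb_one, mul_zero]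

theorem sub_le_mul_log_div {x y : ℝ} (hx : 0 ≤ x) (hy : 0 ≤ y) (hxy : y = 0 → x = 0) :
    x - y ≤ x * Real.log (x / y) := by
  rcases hx.eq_or_lt with rfl | hx
  · simpa using hy
  · have hy : 0 < y := hy.lt_of_ne' fun h => hx.ne' (hxy h)
    calc x - y = x * (1 - (x / y)⁻¹) := by field_simp
      _ ≤ x * Real.log (x / y) := by
        gcongr
        exact Real.one_sub_inv_le_log_of_pos (div_pos hx hy)

theorem relEnt_nonneg {f g : ι → ℝ} (hf : ∀ i, 0 ≤ f i) (hg : ∀ i, 0 ≤ g i)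
    (hfg : ∀ i, g i = 0 → f i = 0) (hsum : ∑ i, g i ≤ ∑ i, f i) : 0 ≤ relEnt f g := by
  have hlog : 0 < Real.log 2 := Real.log_pos one_lt_two
  calc 0 ≤ (∑ i, f i - ∑ i, g i) / Real.log 2 := div_nonneg (sub_nonneg.2 hsum) hlog.le
    _ = ∑ i, (f i - g i) / Real.log 2 := by rw [← Finset.sum_sub_distrib, Finset.sum_div]
    _ ≤ ∑ i, f i * Real.log (f i / g i) / Real.log 2 := by
      gcongr with i
      exact sub_le_mul_log_div (hf i) (hg i) (hfg i)
    _ = relEnt f g := by simp only [relEnt, Real.logb, mul_div_assoc]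

end RelativeEntropy

variable {Ω : Type*} [Fintype Ω] {p : Ω → ℝ} {α β γ δ : Type*}

section Distribution

theorem sum_dist_mul [Fintype α] (p : Ω → ℝ) (X : Ω → α) (f : α → ℝ) :
    ∑ a, dist p X a * f a = ∑ ω, p ω * f (X ω) := by
  simp only [dist, Finset.sum_mul, ite_mul, zero_mul]
  rw [Finset.sum_comm]
  simp only [Finset.sum_ite_eq, Finset.mem_univ, if_true]

theorem sum_dist [Fintype α] (p : Ω → ℝ) (X : Ω → α) : ∑ a, dist p X a = ∑ ω, p ω := by
  simpa only [mul_one] using sum_dist_mul p X fun _ => 1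

theorem sum_dist_prodMk [Fintype α] (p : Ω → ℝ) (A : Ω → α) (B : Ω → β) (b : β) :
    ∑ a, dist p (fun ω => (A ω, B ω)) (a, b) = dist p B b := by
  simp only [dist, Prod.mk.injEq, ite_and]
  rw [Finset.sum_comm]
  simp only [Finset.sum_ite_eq, Finset.mem_univ, if_true]

theorem dist_nonneg (hp : ∀ ω, 0 ≤ p ω) (X : Ω → α) (a : α) : 0 ≤ dist p X a :=
  Finset.sum_nonneg fun ω _ => ite_nonneg (hp ω) le_rfl

theorem dist_le_dist_comp (hp : ∀ ω, 0 ≤ p ω) (X : Ω → α) (f : α → β) (a : α) :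
    dist p X a ≤ dist p (fun ω => f (X ω)) (f a) := by
  refine Finset.sum_le_sum fun ω _ => ?_
  by_cases h : X ω = a
  · rw [if_pos h, if_pos (congrArg f h)]
  · rw [if_neg h]
    exact ite_nonneg (hp ω) le_rfl

theorem dist_eq_zero_of_dist_comp_eq_zero (hp : ∀ ω, 0 ≤ p ω) (X : Ω → α) (f : α → β) {a : α}
    (h : dist p (fun ω => f (X ω)) (f a) = 0) : dist p X a = 0 :=
  ((dist_le_dist_comp hp X f a).trans_eq h).antisymm (dist_nonneg hp X a)

theorem dist_apply_pos (hp : ∀ ω, 0 ≤ p ω) (X : Ω → α) {ω : Ω} (hω : 0 < p ω) :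
    0 < dist p X (X ω) :=
  Finset.sum_pos' (fun ω _ => ite_nonneg (hp ω) le_rfl) ⟨ω, Finset.mem_univ ω, by rwa [if_pos rfl]⟩

end Distribution

section CondIndepDist

/-- The mass function `P(a, c) P(b, c) / P(c)` under which `A` and `B` are conditionally independent
given `C` and the pairs `(A, C)` and `(B, C)` keep their laws. Where `P(c) = 0` the division
gives `0`. -/
def condIndepDist (p : Ω → ℝ) (A : Ω → α) (B : Ω → β) (C : Ω → γ) (x : α × β × γ) : ℝ :=
  dist p (fun ω => (A ω, C ω)) (x.1, x.2.2) * dist p (fun ω => (B ω, C ω)) x.2 / dist p C x.2.2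

theorem condIndepDist_nonneg (hp : ∀ ω, 0 ≤ p ω) (A : Ω → α) (B : Ω → β) (C : Ω → γ)
    (x : α × β × γ) : 0 ≤ condIndepDist p A B C x :=
  div_nonneg (mul_nonneg (dist_nonneg hp _ _) (dist_nonneg hp _ _)) (dist_nonneg hp _ _)

theorem dist_eq_zero_of_condIndepDist_eq_zero (hp : ∀ ω, 0 ≤ p ω) (A : Ω → α) (B : Ω → β)
    (C : Ω → γ) (x : α × β × γ) (hx : condIndepDist p A B C x = 0) :
    dist p (fun ω => (A ω, B ω, C ω)) x = 0 := by
  rw [condIndepDist, div_eq_zero_iff, mul_eq_zero] at hx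
  rcases hx with (hAC | hBC) | hC
  · exact dist_eq_zero_of_dist_comp_eq_zero hp _ (fun x => (x.1, x.2.2)) hAC
  · exact dist_eq_zero_of_dist_comp_eq_zero hp _ (fun x => x.2) hBC
  · exact dist_eq_zero_of_dist_comp_eq_zero hp _ (fun x => x.2.2) hC

theorem sum_condIndepDist [Fintype α] [Fintype β] [Fintype γ] (p : Ω → ℝ) (A : Ω → α) (B : Ω → β)
    (C : Ω → γ) : ∑ x, condIndepDist p A B C x = ∑ ω, p ω := by
  calc ∑ x, condIndepDist p A B C x
    _ = ∑ c, (∑ a, dist p (fun ω => (A ω, C ω)) (a, c)) *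
          (∑ b, dist p (fun ω => (B ω, C ω)) (b, c)) / dist p C c := by
      simp only [condIndepDist, Fintype.sum_prod_type_right, Finset.mul_sum]
      simp only [Finset.sum_mul, Finset.sum_div]
    _ = ∑ c, dist p C c := by simp only [sum_dist_prodMk, mul_self_div_self]
    _ = ∑ ω, p ω := sum_dist p C

theorem CondIndep.condIndepDist_eq (hp : ∀ ω, 0 ≤ p ω) {A : Ω → α} {B : Ω → β} {C : Ω → γ}
    (h : CondIndep p A B C) : condIndepDist p A B C = dist p (fun ω => (A ω, B ω, C ω)) := by
  ext ⟨a, b, c⟩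
  rcases eq_or_ne (dist p C c) 0 with hc | hc
  · have h0 : condIndepDist p A B C (a, b, c) = 0 := by simp only [condIndepDist, hc, div_zero]
    rw [h0, dist_eq_zero_of_condIndepDist_eq_zero hp A B C _ h0]
  · exact (eq_div_of_mul_eq hc (h a b c)).symm

end CondIndepDist

section Entropy

theorem ent_eq_neg_sum [Fintype α] (p : Ω → ℝ) (X : Ω → α) :
    ent p X = -∑ ω, p ω * Real.logb 2 (dist p X (X ω)) := by
  rw [ent, sum_dist_mul p X fun a => Real.logb 2 (dist p X a)]

theorem ent_congr [Fintype α] [Fintype β] (p : Ω → ℝ) {X : Ω → α} {Y : Ω → β}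
    (h : ∀ ω ω', X ω = X ω' ↔ Y ω = Y ω') : ent p X = ent p Y := by
  simp only [ent_eq_neg_sum, dist, h]

end Entropy

section CondMI

variable [Fintype α] [Fintype β] [Fintype γ] [Fintype δ]

theorem condMI_congr {β' γ' : Type*} [Fintype β'] [Fintype γ'] (p : Ω → ℝ) (A : Ω → α)
    {B : Ω → β} {B' : Ω → β'} {C : Ω → γ} {C' : Ω → γ'}
    (hB : ∀ ω ω', B ω = B ω' ↔ B' ω = B' ω') (hC : ∀ ω ω', C ω = C ω' ↔ C' ω = C' ω') :
    condMI p A B C = condMI p A B' C' := by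
  simp only [condMI, ent_eq_neg_sum, dist, Prod.mk.injEq, hB, hC]

theorem condMI_prodMk_eq_add (p : Ω → ℝ) (A : Ω → α) (B : Ω → β) (C : Ω → γ) (D : Ω → δ) :
    condMI p A (fun ω => (B ω, C ω)) D
      = condMI p A C D + condMI p A B (fun ω => (C ω, D ω)) := by
  have hBCD : ent p (fun ω => ((B ω, C ω), D ω)) = ent p (fun ω => (B ω, C ω, D ω)) :=
    ent_congr p fun _ _ => by simp only [Prod.mk.injEq, and_assoc]
  have hABCD : ent p (fun ω => (A ω, (B ω, C ω), D ω)) = ent p (fun ω => (A ω, B ω, C ω, D ω)) :=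
    ent_congr p fun _ _ => by simp only [Prod.mk.injEq, and_assoc]
  simp only [condMI]
  linarith

theorem condMI_eq_relEnt (hp : ∀ ω, 0 ≤ p ω) (A : Ω → α) (B : Ω → β) (C : Ω → γ) :
    condMI p A B C = relEnt (dist p (fun ω => (A ω, B ω, C ω))) (condIndepDist p A B C) := by
  rw [relEnt, sum_dist_mul p _ fun x =>
    Real.logb 2 (dist p (fun ω => (A ω, B ω, C ω)) x / condIndepDist p A B C x)]
  simp only [condMI, ent_eq_neg_sum, ← Finset.sum_neg_distrib, ← Finset.sum_add_distrib,
    ← Finset.sum_sub_distrib]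
  refine Finset.sum_congr rfl fun ω _ => ?_
  rcases (hp ω).eq_or_lt with hω | hω
  · simp only [← hω, zero_mul, neg_zero, add_zero, sub_zero]
  have hAC := dist_apply_pos hp (fun ω => (A ω, C ω)) hω
  have hBC := dist_apply_pos hp (fun ω => (B ω, C ω)) hω
  have hABC := dist_apply_pos hp (fun ω => (A ω, B ω, C ω)) hω
  have hC := dist_apply_pos hp C hω
  rw [condIndepDist, Real.logb_div hABC.ne' (div_pos (mul_pos hAC hBC) hC).ne',
    Real.logb_div (mul_pos hAC hBC).ne' hC.ne', Real.logb_mul hAC.ne' hBC.ne']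
  ring

theorem condMI_nonneg (hp : ∀ ω, 0 ≤ p ω) (A : Ω → α) (B : Ω → β) (C : Ω → γ) :
    0 ≤ condMI p A B C := by
  rw [condMI_eq_relEnt hp]
  refine relEnt_nonneg (dist_nonneg hp _) (condIndepDist_nonneg hp A B C)
    (dist_eq_zero_of_condIndepDist_eq_zero hp A B C) ?_
  rw [sum_condIndepDist, sum_dist]

theorem CondIndep.condMI_eq_zero (hp : ∀ ω, 0 ≤ p ω) {A : Ω → α} {B : Ω → β} {C : Ω → γ}
    (h : CondIndep p A B C) : condMI p A B C = 0 := by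
  rw [condMI_eq_relEnt hp, h.condIndepDist_eq hp, relEnt_self]

theorem condMI_le_condMI_prodMk (hp : ∀ ω, 0 ≤ p ω) (A : Ω → α) (B : Ω → β) (C : Ω → γ)
    (D : Ω → δ) :
    condMI p A B (fun ω => (C ω, D ω)) ≤ condMI p A (fun ω => (B ω, C ω)) D := by
  rw [condMI_prodMk_eq_add]
  exact le_add_of_nonneg_left (condMI_nonneg hp A C D)

theorem condMI_prodMk_le_add (hp : ∀ ω, 0 ≤ p ω) (A : Ω → α) (B : Ω → β) (C : Ω → γ)
    (D : Ω → δ) :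
    condMI p A B (fun ω => (C ω, D ω))
      ≤ condMI p A B D + condMI p A C (fun ω => (B ω, D ω)) :=
  calc condMI p A B (fun ω => (C ω, D ω))
    _ ≤ condMI p A (fun ω => (B ω, C ω)) D := condMI_le_condMI_prodMk hp A B C D
    _ = condMI p A (fun ω => (C ω, B ω)) D :=
      condMI_congr p A (fun _ _ => by simp only [Prod.mk.injEq, and_comm]) fun _ _ => Iff.rfl
    _ = condMI p A B D + condMI p A C (fun ω => (B ω, D ω)) := condMI_prodMk_eq_add p A C B D

end CondMI

end RelayPaper

theorem conditioning_reduction_inequality_general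
    {Ω 𝒳 𝒴₀ 𝒴' 𝒴 𝒲 𝒰 : Type*} [Fintype Ω] [Fintype 𝒳] [Fintype 𝒴₀] [Fintype 𝒴']
    [Fintype 𝒴] [Fintype 𝒲] [Fintype 𝒰]
    {p : Ω → ℝ} (hp : ∀ ω, 0 ≤ p ω)
    (Xhat : Ω → 𝒳) (Y₀ : Ω → 𝒴₀) (Y' : Ω → 𝒴') (Y : Ω → 𝒴) (W : Ω → 𝒲) (U : Ω → 𝒰) :
    condMI p Xhat Y₀ (fun ω => (Y' ω, Y ω, W ω, U ω))
      ≤ condMI p Xhat Y₀ (fun ω => (Y' ω, W ω, U ω))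
        + condMI p Xhat (fun ω => (Y' ω, Y ω, W ω)) (fun ω => (Y₀ ω, U ω)) := by
  have hdefect : condMI p Xhat Y (fun ω => (Y₀ ω, Y' ω, W ω, U ω))
      ≤ condMI p Xhat (fun ω => (Y' ω, Y ω, W ω)) (fun ω => (Y₀ ω, U ω)) :=
    calc condMI p Xhat Y (fun ω => (Y₀ ω, Y' ω, W ω, U ω))
      _ = condMI p Xhat Y (fun ω => ((Y' ω, W ω), Y₀ ω, U ω)) :=
        condMI_congr p Xhat (fun _ _ => Iff.rfl) fun _ _ => by grind
      _ ≤ condMI p Xhat (fun ω => (Y ω, Y' ω, W ω)) (fun ω => (Y₀ ω, U ω)) :=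
        condMI_le_condMI_prodMk hp Xhat Y (fun ω => (Y' ω, W ω)) (fun ω => (Y₀ ω, U ω))
      _ = condMI p Xhat (fun ω => (Y' ω, Y ω, W ω)) (fun ω => (Y₀ ω, U ω)) :=
        condMI_congr p Xhat (fun _ _ => by grind) fun _ _ => Iff.rfl
  calc condMI p Xhat Y₀ (fun ω => (Y' ω, Y ω, W ω, U ω))
    _ = condMI p Xhat Y₀ (fun ω => (Y ω, Y' ω, W ω, U ω)) :=
      condMI_congr p Xhat (fun _ _ => Iff.rfl) fun _ _ => by grind
    _ ≤ condMI p Xhat Y₀ (fun ω => (Y' ω, W ω, U ω))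
        + condMI p Xhat Y (fun ω => (Y₀ ω, Y' ω, W ω, U ω)) :=
      condMI_prodMk_le_add hp Xhat Y₀ Y (fun ω => (Y' ω, W ω, U ω))
    _ ≤ condMI p Xhat Y₀ (fun ω => (Y' ω, W ω, U ω))
        + condMI p Xhat (fun ω => (Y' ω, Y ω, W ω)) (fun ω => (Y₀ ω, U ω)) := by gcongr

/-- **Conditioning-reduction inequality from Appendix B.**
If X̂ – (Y₀,U) – (Y',Y,W) is a Markov chain, then
`I(X̂; Y₀ | (Y',Y,W,U)) ≤ I(X̂; Y₀ | (Y',W,U))`. -/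
theorem conditioning_reduction_inequality
    {Ω 𝒳 𝒴₀ 𝒴' 𝒴 𝒲 𝒰 : Type*} [Fintype Ω] [Fintype 𝒳] [Fintype 𝒴₀] [Fintype 𝒴']
    [Fintype 𝒴] [Fintype 𝒲] [Fintype 𝒰]
    (p : Ω → ℝ) (hp : IsPMF p)
    (Xhat : Ω → 𝒳) (Y₀ : Ω → 𝒴₀) (Y' : Ω → 𝒴') (Y : Ω → 𝒴) (W : Ω → 𝒲) (U : Ω → 𝒰)
    (hMarkov : CondIndep p Xhat (fun ω => (Y' ω, Y ω, W ω)) (fun ω => (Y₀ ω, U ω))) :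
    condMI p Xhat Y₀ (fun ω => (Y' ω, Y ω, W ω, U ω))
      ≤ condMI p Xhat Y₀ (fun ω => (Y' ω, W ω, U ω)) := by
  simpa only [hMarkov.condMI_eq_zero hp.1, add_zero] using
    conditioning_reduction_inequality_general hp.1 Xhat Y₀ Y' Y W U
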